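/- Fix p > 1, r ∈ (p + 2/3, 5p/3), and set α = 9(p−1)/(5p−3r). Then there is a constant C = C(p, r) such that every nonnegative Schwartz-class function g : ℝ³ → ℝ satisfies ∫_{ℝ³} g^r dv ≤ C ( ∫_{ℝ³} ⟨v⟩^{−3} |∇(g^{p/2})|² dv + ∫_{ℝ³} g^p dv ) · ( ∫_{ℝ³} g^p dv )^{(r−p−2/3)/(p−1)} · ( ∫_{ℝ³} ⟨v⟩^α g dv )^{(5p−3r)/(3(p−1))}. -/

import Mathlib

open MeasureTheory Real Filter Set

noncomputable section

/-- Velocity space ℝ³. -/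
abbrev V3 : Type := EuclideanSpace ℝ (Fin 3)

/-- Japanese bracket ⟨v⟩ = (1+|v|²)^{1/2}. -/
def jap (v : V3) : ℝ := Real.sqrt (1 + ‖v‖ ^ 2)

/-- Partial derivative in the i-th coordinate direction. -/
def pd (i : Fin 3) (g : V3 → ℝ) (v : V3) : ℝ :=
  fderiv ℝ g v (EuclideanSpace.single i 1)

/-- Projection matrix Π(z) = Id − z⊗z/|z|². -/
def projPi (z : V3) (i j : Fin 3) : ℝ :=
  (if i = j then (1 : ℝ) else 0) - z i * z j / ‖z‖ ^ 2

/-- Landau–Coulomb diffusion matrix A[f]. -/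
def coeffA (f : V3 → ℝ) (v : V3) (i j : Fin 3) : ℝ :=
  (8 * π)⁻¹ * ∫ w : V3, projPi (v - w) i j / ‖v - w‖ * f w

/-- Newtonian potential a[f] = (−Δ)⁻¹ f. -/
def coeffa (f : V3 → ℝ) (v : V3) : ℝ :=
  (4 * π)⁻¹ * ∫ w : V3, f w / ‖v - w‖

/-- The homogeneous Landau–Coulomb equation
    ∂_t f = ∇·(A[f]∇f − f ∇a[f]), pointwise at (t,v). -/
def LandauEqAt (f : ℝ → V3 → ℝ) (t : ℝ) (v : V3) : Prop :=
  deriv (fun s => f s v) t =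
    ∑ i : Fin 3, pd i
      (fun w => (∑ j : Fin 3, coeffA (f t) w i j * pd j (f t) w)
        - f t w * pd i (coeffa (f t)) w) v

/-- Normalization: unit mass, zero momentum, energy 3. -/
def IsNormalized (f : V3 → ℝ) : Prop :=
  (∫ v : V3, f v) = 1 ∧ (∀ i : Fin 3, (∫ v : V3, f v * v i) = 0) ∧
    (∫ v : V3, f v * ‖v‖ ^ 2) = 3

/-- Schwartz class function. -/
def IsSchwartz (g : V3 → ℝ) : Prop := ∃ h : SchwartzMap V3 ℝ, ⇑h = g

/-- Distributional (weak) solution of the Landau–Coulomb equation on (0,T). -/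
def IsWeakLandauSolution (T : ℝ) (g : ℝ → V3 → ℝ) : Prop :=
  ∀ φ : ℝ × V3 → ℝ, ContDiff ℝ (⊤ : ℕ∞) φ → HasCompactSupport φ →
    (Function.support φ ⊆ Set.Ioo 0 T ×ˢ (Set.univ : Set V3)) →
    (∫ t in Set.Ioo 0 T, ∫ v : V3, φ (t, v) * deriv (fun s => g s v) t) =
      - ∫ t in Set.Ioo 0 T, ∫ v : V3, ∑ i : Fin 3,
          (fderiv ℝ φ (t, v) (0, EuclideanSpace.single i 1)) *
          ((∑ j : Fin 3, coeffA (g t) v i j * pd j (g t) v)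
            - g t v * pd i (coeffa (g t)) v)

/-- Membership in L^r(0,T;L^p(ℝ³)). -/
def MemLrLp (r p T : ℝ) (g : ℝ → V3 → ℝ) : Prop :=
  (∀ᵐ t ∂(volume.restrict (Set.Ioo 0 T)), Integrable (fun v : V3 => |g t v| ^ p)) ∧
  IntegrableOn (fun t => (∫ v : V3, |g t v| ^ p) ^ (r / p)) (Set.Ioo 0 T)

/-- g ∈ W^{1,∞}(Ω) for every Ω compactly contained in (0,T] × ℝ³,
    i.e. g is Lipschitz on every compact subset of (0,T] × ℝ³. -/
def LocLipschitz (T : ℝ) (g : ℝ → V3 → ℝ) : Prop :=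
  ∀ K : Set (ℝ × V3), IsCompact K → K ⊆ Set.Ioc 0 T ×ˢ (Set.univ : Set V3) →
    ∃ L : NNReal, LipschitzOnWith L (fun q : ℝ × V3 => g q.1 q.2) K

/-!
Apply the Sobolev inequality to `⟨v⟩^{-k/2} g^{p/2}`, where the derivative of the weight only
produces a multiple of `‖g^{p/2}‖_{L²}`, and interpolate: with `q` the Sobolev exponent of `2` and
`2 / q + β + γ = 1`, Hölder's inequality with exponents `2 / q, β, γ` applied to
`g ^ (p + pβ + γ) = (⟨v⟩^{-k/2} g^{p/2})² · (g^p)^β · (⟨v⟩^α g)^γ`, `αγ = k`, is the estimate.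
Compact support is removed from the Sobolev inequality by cutoffs with uniformly bounded
Lipschitz constants.

For `p < 2` the function `t ↦ t^{p/2}` is not differentiable at `0`, so the chain rule does not show
that `g^{p/2}` is `C¹` with a square-integrable gradient. This is where nonnegativity enters: if
`∇g` is `K`-Lipschitz then `|∇g|² ≤ 4 K g`, hence `|∇(g^{p/2})|² ≤ K p² g^{p-1}`, which for `p > 1`
controls the gradient near the zeros of `g` and at infinity.
-/

open Module
open scoped NNReal ENNReal Topology

section NonnegRpow

variable {E F : Type*} [NormedAddCommGroup E] [NormedSpace ℝ E]
  [NormedAddCommGroup F] [NormedSpace ℝ F]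

lemma norm_sub_sub_fderiv_le_of_lipschitzWith_fderiv {f : E → F} {K : ℝ≥0}
    (hf : Differentiable ℝ f) (hK : LipschitzWith K (fderiv ℝ f)) (x h : E) :
    ‖f (x + h) - f x - fderiv ℝ f x h‖ ≤ K * ‖h‖ ^ 2 := by
  have fderiv_sub_le : ∀ y ∈ Metric.closedBall x ‖h‖,
      ‖fderiv ℝ f y - fderiv ℝ f x‖ ≤ K * ‖h‖ := fun y hy => by
    rw [mem_closedBall_iff_norm] at hy
    exact (hK.norm_sub_le y x).trans (by gcongr)
  have := (convex_closedBall x ‖h‖).norm_image_sub_le_of_norm_fderiv_le'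
    (fun y _ => hf y) fderiv_sub_le (Metric.mem_closedBall_self (norm_nonneg h))
    (show x + h ∈ _ by simp)
  rwa [add_sub_cancel_left, mul_assoc, ← sq] at this

lemma hasFDerivAt_zero_of_isBigO_rpow {f : E → F} {x : E} {a : ℝ} (ha : 1 < a)
    (hf : (fun y => f y - f x) =O[𝓝 x] fun y => ‖y - x‖ ^ a) :
    HasFDerivAt f (0 : E →L[ℝ] F) x := by
  have rpow_sub_one_tendsto : Tendsto (fun y => ‖y - x‖ ^ (a - 1)) (𝓝 x) (𝓝 0) := by
    have : ContinuousAt (fun y => ‖y - x‖ ^ (a - 1)) x :=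
      ContinuousAt.rpow_const (by fun_prop) (Or.inr (by linarith))
    simpa [ContinuousAt, Real.zero_rpow (sub_pos.2 ha).ne'] using this
  have rpow_isLittleO : (fun y => ‖y - x‖ ^ a) =o[𝓝 x] fun y => y - x := by
    have := ((Asymptotics.isLittleO_one_iff ℝ).2 rpow_sub_one_tendsto).mul_isBigO
      (Asymptotics.isBigO_refl (fun y => ‖y - x‖) (𝓝 x))
    refine (this.congr (fun y => ?_) fun y => one_mul _).of_norm_right
    rw [← Real.rpow_add_one' (norm_nonneg _) (by linarith), sub_add_cancel]
  exact .of_isLittleO (by simpa using hf.trans_isLittleO rpow_isLittleO)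

variable {g : E → ℝ} {K : ℝ≥0} {s : ℝ}

-- The Taylor lower bound for `g` along a line is a nonnegative quadratic polynomial.
lemma norm_fderiv_sq_le_of_nonneg (hg : Differentiable ℝ g) (hK : LipschitzWith K (fderiv ℝ g))
    (hg0 : ∀ x, 0 ≤ g x) (x : E) : ‖fderiv ℝ g x‖ ^ 2 ≤ 4 * K * g x := by
  have hgx := hg0 x
  refine Real.le_sqrt (by positivity) (by positivity) |>.1
    (ContinuousLinearMap.opNorm_le_bound _ (Real.sqrt_nonneg _) fun e => ?_)
  have quadratic_nonneg (t : ℝ) :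
      0 ≤ K * ‖e‖ ^ 2 * (t * t) + fderiv ℝ g x e * t + g x := by
    have taylor := (abs_le.1
      (norm_sub_sub_fderiv_le_of_lipschitzWith_fderiv hg hK x (t • e))).2
    rw [map_smul, norm_smul, mul_pow, Real.norm_eq_abs, sq_abs, smul_eq_mul] at taylor
    linarith [hg0 (x + t • e)]
  have discrim_nonpos := discrim_le_zero quadratic_nonneg
  rw [discrim] at discrim_nonpos
  refine abs_le_of_sq_le_sq ?_ (by positivity)
  rw [mul_pow, Real.sq_sqrt (by positivity)]
  linarith

lemma fderiv_eq_zero_of_nonneg {x : E} (hg0 : ∀ y, 0 ≤ g y) (hx : g x = 0) :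
    fderiv ℝ g x = 0 :=
  IsLocalMin.fderiv_eq_zero (Eventually.of_forall fun y => hx.trans_le (hg0 y))

lemma hasFDerivAt_rpow_of_nonneg (hg : Differentiable ℝ g)
    (hK : LipschitzWith K (fderiv ℝ g)) (hg0 : ∀ x, 0 ≤ g x) (hs : 1 / 2 < s) (x : E) :
    HasFDerivAt (fun y => g y ^ s) ((s * g x ^ (s - 1)) • fderiv ℝ g x) x := by
  rcases eq_or_ne (g x) 0 with hx | hx
  · have fderiv_zero := fderiv_eq_zero_of_nonneg hg0 hx
    have isBigO_sq : g =O[𝓝 x] fun y => ‖y - x‖ ^ 2 := .of_bound K <| .of_forall fun y => by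
      simpa [hx, fderiv_zero] using
        norm_sub_sub_fderiv_le_of_lipschitzWith_fderiv hg hK x (y - x)
    have isBigO_rpow : (fun y => g y ^ s) =O[𝓝 x] fun y => ‖y - x‖ ^ (2 * s) := by
      simp_rw [Real.rpow_mul (norm_nonneg _), Real.rpow_two]
      exact isBigO_sq.rpow (by linarith) (.of_forall fun y => by positivity)
    rw [fderiv_zero, smul_zero]
    refine hasFDerivAt_zero_of_isBigO_rpow (by linarith : 1 < 2 * s) ?_
    simpa [hx, Real.zero_rpow (by linarith : s ≠ 0)] using isBigO_rpow
  · exact (hg x).hasFDerivAt.rpow_const (Or.inl hx)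

lemma norm_fderiv_rpow_sq_le_of_nonneg (hg : Differentiable ℝ g)
    (hK : LipschitzWith K (fderiv ℝ g)) (hg0 : ∀ x, 0 ≤ g x) (hs : 1 / 2 < s) (x : E) :
    ‖fderiv ℝ (fun y => g y ^ s) x‖ ^ 2 ≤ 4 * K * s ^ 2 * g x ^ (2 * s - 1) := by
  rw [(hasFDerivAt_rpow_of_nonneg hg hK hg0 hs x).fderiv, norm_smul, mul_pow,
    Real.norm_eq_abs, sq_abs]
  rcases (hg0 x).eq_or_lt' with hx | hx
  · simp [fderiv_eq_zero_of_nonneg hg0 hx, hx, Real.zero_rpow (by linarith : 2 * s - 1 ≠ 0)]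
  · calc (s * g x ^ (s - 1)) ^ 2 * ‖fderiv ℝ g x‖ ^ 2
        ≤ (s * g x ^ (s - 1)) ^ 2 * (4 * K * g x) := by
          gcongr; exact norm_fderiv_sq_le_of_nonneg hg hK hg0 x
      _ = 4 * K * s ^ 2 * ((g x ^ (s - 1)) ^ 2 * g x) := by ring
      _ = 4 * K * s ^ 2 * g x ^ (2 * s - 1) := by
          rw [← Real.rpow_mul_natCast hx.le, ← Real.rpow_add_one hx.ne']
          congr 2
          push_cast
          ring

lemma contDiff_one_rpow_of_nonneg (hg : Differentiable ℝ g)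
    (hK : LipschitzWith K (fderiv ℝ g)) (hg0 : ∀ x, 0 ≤ g x) (hs : 1 / 2 < s) :
    ContDiff ℝ 1 fun x => g x ^ s := by
  have hasFDerivAt_rpow := hasFDerivAt_rpow_of_nonneg hg hK hg0 hs
  refine contDiff_one_iff_fderiv.2 ⟨fun x => (hasFDerivAt_rpow x).differentiableAt,
    continuous_iff_continuousAt.2 fun x => ?_⟩
  rcases eq_or_ne (g x) 0 with hx | hx
  · have fderiv_zero : fderiv ℝ (fun y => g y ^ s) x = 0 :=
      fderiv_eq_zero_of_nonneg (fun y => Real.rpow_nonneg (hg0 y) s)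
        (by rw [hx, Real.zero_rpow (by linarith)])
    have bound_tendsto :
        Tendsto (fun y => √(4 * K * s ^ 2 * g y ^ (2 * s - 1))) (𝓝 x) (𝓝 0) := by
      have : Continuous fun y => √(4 * K * s ^ 2 * g y ^ (2 * s - 1)) :=
        (continuous_const.mul
          (hg.continuous.rpow_const fun _ => Or.inr (by linarith))).sqrt
      simpa [hx, Real.zero_rpow (by linarith : 2 * s - 1 ≠ 0)] using this.tendsto x
    rw [ContinuousAt, fderiv_zero]
    exact squeeze_zero_norm (fun y => Real.le_sqrt_of_sq_le
      (norm_fderiv_rpow_sq_le_of_nonneg hg hK hg0 hs y)) bound_tendsto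
  · rw [funext fun y => (hasFDerivAt_rpow y).fderiv]
    exact (continuousAt_const.mul ((hg x).continuousAt.rpow_const (Or.inl hx))).smul
      hK.continuous.continuousAt

end NonnegRpow

section Sobolev

variable {F : Type*} [NormedAddCommGroup F] [NormedSpace ℝ F]

lemma eLpNorm_smul_le_of_norm_le_one {α : Type*} [MeasurableSpace α] (μ : Measure α) (p : ℝ≥0∞)
    {w : α → ℝ} (hw : ∀ x, ‖w x‖ ≤ 1) (u : α → F) :
    eLpNorm (fun x => w x • u x) p μ ≤ eLpNorm u p μ :=
  eLpNorm_mono fun x => by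
    rw [norm_smul]
    exact mul_le_of_le_one_left (norm_nonneg _) (hw x)

variable {E : Type*} [NormedAddCommGroup E] [NormedSpace ℝ E]

lemma norm_fderiv_smul_le {w : E → ℝ} {u : E → F} {K : ℝ≥0} {x : E}
    (hw : DifferentiableAt ℝ w x) (hu : DifferentiableAt ℝ u x) (hK : LipschitzWith K w) :
    ‖fderiv ℝ (fun y => w y • u y) x‖ ≤ ‖w x • fderiv ℝ u x‖ + K * ‖u x‖ := by
  rw [fderiv_fun_smul hw hu]
  refine (norm_add_le _ _).trans ?_
  rw [ContinuousLinearMap.norm_smulRight_apply]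
  gcongr
  exact norm_fderiv_le_of_lipschitz ℝ hK

lemma eLpNorm_fderiv_smul_le [MeasurableSpace E] [BorelSpace E] (μ : Measure E) {p : ℝ≥0∞}
    (hp : 1 ≤ p) {w : E → ℝ} {u : E → F} {K : ℝ≥0} (hw : ContDiff ℝ 1 w) (hu : ContDiff ℝ 1 u)
    (hK : LipschitzWith K w) :
    eLpNorm (fderiv ℝ fun x => w x • u x) p μ ≤
      (1 + K) * (eLpNorm (fun x => w x • fderiv ℝ u x) p μ + eLpNorm u p μ) := by
  have hfderiv : Continuous (fderiv ℝ u) := hu.continuous_fderiv one_ne_zero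
  calc eLpNorm (fderiv ℝ fun x => w x • u x) p μ
      ≤ eLpNorm (fun x => ‖w x • fderiv ℝ u x‖ + K * ‖u x‖) p μ :=
        eLpNorm_mono_real fun x => norm_fderiv_smul_le
          (hw.differentiable one_ne_zero x) (hu.differentiable one_ne_zero x) hK
    _ ≤ eLpNorm (fun x => ‖w x • fderiv ℝ u x‖) p μ + eLpNorm (fun x => K * ‖u x‖) p μ :=
        eLpNorm_add_le (hw.continuous.smul hfderiv).norm.aestronglyMeasurable
          (hu.continuous.norm.const_mul _).aestronglyMeasurable hp
    _ = eLpNorm (fun x => w x • fderiv ℝ u x) p μ + K * eLpNorm u p μ := by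
        rw [eLpNorm_norm]
        congr 1
        refine (eLpNorm_const_smul (K : ℝ) (fun x => ‖u x‖) p μ).trans ?_
        rw [eLpNorm_norm, Real.enorm_of_nonneg K.coe_nonneg, ENNReal.ofReal_coe_nnreal]
    _ ≤ (1 + K) * (eLpNorm (fun x => w x • fderiv ℝ u x) p μ + eLpNorm u p μ) := by
        rw [mul_add]
        gcongr
        · exact le_mul_of_one_le_left' le_self_add
        · exact le_add_self

variable [FiniteDimensional ℝ E]

variable (E) in
lemma exists_lipschitzWith_cutoff :
    ∃ K : ℝ≥0, ∀ n : ℕ, ∃ χ : E → ℝ, ContDiff ℝ 1 χ ∧ HasCompactSupport χ ∧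
      (∀ x, ‖χ x‖ ≤ 1) ∧ (∀ x ∈ Metric.closedBall (0 : E) n, χ x = 1) ∧ LipschitzWith K χ := by
  let b : ContDiffBump (0 : E) := ⟨1, 2, one_pos, one_lt_two⟩
  have hb : ContDiff ℝ 1 b := b.contDiff
  obtain ⟨K, hK⟩ := hb.lipschitzWith_of_hasCompactSupport b.hasCompactSupport one_ne_zero
  refine ⟨K, fun n => ?_⟩
  have scale_pos : (0 : ℝ) < (n + 1 : ℝ)⁻¹ := by positivity
  have scale_norm_le : ‖(n + 1 : ℝ)⁻¹‖₊ ≤ 1 := by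
    rw [← NNReal.coe_le_coe, coe_nnnorm, Real.norm_of_nonneg scale_pos.le]
    exact inv_le_one_of_one_le₀ (by simp)
  refine ⟨fun x => b ((n + 1 : ℝ)⁻¹ • x), hb.comp (contDiff_const_smul _),
    b.hasCompactSupport.comp_smul scale_pos.ne', fun x => ?_, fun x hx => ?_, ?_⟩
  · rw [Real.norm_of_nonneg b.nonneg]
    exact b.le_one
  · refine b.one_of_mem_closedBall ?_
    rw [mem_closedBall_zero_iff] at hx ⊢
    rw [norm_smul, Real.norm_of_nonneg scale_pos.le, inv_mul_le_iff₀ (by positivity)]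
    change ‖x‖ ≤ (n + 1) * 1
    linarith
  · exact (hK.comp (lipschitzWith_smul _)).weaken (mul_le_of_le_one_right' scale_norm_le)

variable [FiniteDimensional ℝ F] [MeasurableSpace E] [BorelSpace E] (μ : Measure E)
  [μ.IsAddHaarMeasure] {p q : ℝ≥0}

variable (F) in
theorem exists_eLpNorm_le_eLpNorm_fderiv_add (hp : 1 ≤ p) (hE : 0 < finrank ℝ E)
    (hq : (q : ℝ)⁻¹ = (p : ℝ)⁻¹ - (finrank ℝ E : ℝ)⁻¹) :
    ∃ C : ℝ≥0, ∀ u : E → F, ContDiff ℝ 1 u →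
      eLpNorm u q μ ≤ C * (eLpNorm (fderiv ℝ u) p μ + eLpNorm u p μ) := by
  obtain ⟨K, hK⟩ := exists_lipschitzWith_cutoff E
  choose χ χ_contDiff χ_compact χ_le_one χ_eq_one χ_lipschitz using hK
  obtain ⟨S, hS⟩ : ∃ S : ℝ≥0, ∀ v : E → F, ContDiff ℝ 1 v → HasCompactSupport v →
      eLpNorm v q μ ≤ S * eLpNorm (fderiv ℝ v) p μ :=
    ⟨_, fun v hv hvc => eLpNorm_le_eLpNorm_fderiv_of_eq μ hv hvc hp hE hq⟩
  refine ⟨S * (1 + K), fun u hu => ?_⟩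
  have cutoff_le (n : ℕ) : eLpNorm (fun x => χ n x • u x) q μ ≤
      (S * (1 + K) : ℝ≥0) * (eLpNorm (fderiv ℝ u) p μ + eLpNorm u p μ) := by
    calc eLpNorm (fun x => χ n x • u x) q μ
        ≤ S * eLpNorm (fderiv ℝ fun x => χ n x • u x) p μ :=
          hS _ ((χ_contDiff n).smul hu) (χ_compact n).smul_right
      _ ≤ S * ((1 + K) * (eLpNorm (fun x => χ n x • fderiv ℝ u x) p μ + eLpNorm u p μ)) := by
          gcongr
          exact eLpNorm_fderiv_smul_le μ (mod_cast hp) (χ_contDiff n) hu (χ_lipschitz n)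
      _ ≤ S * ((1 + K) * (eLpNorm (fderiv ℝ u) p μ + eLpNorm u p μ)) := by
          gcongr S * ((1 + K) * (?_ + _))
          exact eLpNorm_smul_le_of_norm_le_one μ p (χ_le_one n) (fderiv ℝ u)
      _ = _ := by push_cast; ring
  have cutoff_tendsto (x : E) : Tendsto (fun n => χ n x • u x) atTop (𝓝 (u x)) := by
    obtain ⟨N, hN⟩ := exists_nat_ge ‖x‖
    refine tendsto_const_nhds.congr' ((eventually_ge_atTop N).mono fun n hn => ?_)
    have hx : x ∈ Metric.closedBall 0 (n : ℝ) :=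
      mem_closedBall_zero_iff.2 (hN.trans (mod_cast hn))
    simp only [χ_eq_one n x hx, one_smul]
  calc eLpNorm u q μ
      ≤ atTop.liminf fun n => eLpNorm (fun x => χ n x • u x) q μ :=
        Lp.eLpNorm_lim_le_liminf_eLpNorm
          (fun n => ((χ_contDiff n).smul hu).continuous.aestronglyMeasurable) u
          (ae_of_all μ cutoff_tendsto)
    _ ≤ _ := liminf_le_of_le (by isBoundedDefault) fun b hb =>
        (hb.exists.elim fun n hn => hn.trans (cutoff_le n))

theorem exists_eLpNorm_smul_le (hp : 1 ≤ p) (hE : 0 < finrank ℝ E)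
    (hq : (q : ℝ)⁻¹ = (p : ℝ)⁻¹ - (finrank ℝ E : ℝ)⁻¹) {w : E → ℝ} {K : ℝ≥0}
    (hw : ContDiff ℝ 1 w) (hw1 : ∀ x, ‖w x‖ ≤ 1) (hK : LipschitzWith K w) :
    ∃ C : ℝ≥0, ∀ u : E → F, ContDiff ℝ 1 u →
      eLpNorm (fun x => w x • u x) q μ ≤
        C * (eLpNorm (fun x => w x • fderiv ℝ u x) p μ + eLpNorm u p μ) := by
  obtain ⟨C, hC⟩ := exists_eLpNorm_le_eLpNorm_fderiv_add F μ hp hE hq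
  refine ⟨C * (2 + K), fun u hu => ?_⟩
  set A := eLpNorm (fun x => w x • fderiv ℝ u x) p μ
  set B := eLpNorm u p μ
  calc eLpNorm (fun x => w x • u x) q μ
      ≤ C * (eLpNorm (fderiv ℝ fun x => w x • u x) p μ + eLpNorm (fun x => w x • u x) p μ) :=
        hC _ (hw.smul hu)
    _ ≤ C * ((1 + K) * (A + B) + (A + B)) := by
        gcongr
        · exact eLpNorm_fderiv_smul_le μ (mod_cast hp) hw hu hK
        · exact (eLpNorm_smul_le_of_norm_le_one μ p hw1 u).trans le_add_self
    _ = (C * (2 + K) : ℝ≥0) * (A + B) := by push_cast; ring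

end Sobolev

/-- The Japanese bracket `⟨v⟩ = (1 + ‖v‖²)^{1/2}` on a normed space; `jap` is the case of `V3`. -/
def japaneseBracket {E : Type*} [NormedAddCommGroup E] (v : E) : ℝ := √(1 + ‖v‖ ^ 2)

section JapaneseBracket

variable {E : Type*} [NormedAddCommGroup E]

lemma one_le_japaneseBracket (v : E) : 1 ≤ japaneseBracket v :=
  Real.one_le_sqrt.2 (le_add_of_nonneg_right (by positivity))

lemma japaneseBracket_pos (v : E) : 0 < japaneseBracket v :=
  one_pos.trans_le (one_le_japaneseBracket v)

lemma norm_le_japaneseBracket (v : E) : ‖v‖ ≤ japaneseBracket v :=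
  Real.le_sqrt_of_sq_le (by linarith)

lemma japaneseBracket_rpow (v : E) (a : ℝ) :
    japaneseBracket v ^ a = (1 + ‖v‖ ^ 2) ^ (a / 2) := by
  rw [japaneseBracket, Real.sqrt_eq_rpow, ← Real.rpow_mul (by positivity), one_div_mul_eq_div]

lemma norm_japaneseBracket_rpow_le_one (v : E) {a : ℝ} (ha : a ≤ 0) :
    ‖japaneseBracket v ^ a‖ ≤ 1 := by
  rw [Real.norm_of_nonneg (Real.rpow_nonneg (japaneseBracket_pos v).le a)]
  exact Real.rpow_le_one_of_one_le_of_nonpos (one_le_japaneseBracket v) ha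

variable [InnerProductSpace ℝ E]

lemma hasTemperateGrowth_japaneseBracket_rpow (a : ℝ) :
    (fun v : E => japaneseBracket v ^ a).HasTemperateGrowth := by
  simp_rw [japaneseBracket_rpow]
  exact Function.hasTemperateGrowth_one_add_norm_sq_rpow E (a / 2)

lemma contDiff_japaneseBracket_rpow (a : ℝ) :
    ContDiff ℝ 1 fun v : E => japaneseBracket v ^ a :=
  (hasTemperateGrowth_japaneseBracket_rpow a).1.of_le (mod_cast le_top)

lemma hasFDerivAt_japaneseBracket_rpow (a : ℝ) (v : E) :
    HasFDerivAt (fun w : E => japaneseBracket w ^ a)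
      ((a * japaneseBracket v ^ (a - 2)) • innerSL ℝ v) v := by
  have := ((hasStrictFDerivAt_norm_sq v).hasFDerivAt.const_add 1).rpow_const (p := a / 2)
    (Or.inl (by positivity))
  simp_rw [japaneseBracket_rpow]
  convert! this using 1
  rw [← Nat.cast_smul_eq_nsmul ℝ, smul_smul, sub_div, div_self two_ne_zero]
  congr 1
  push_cast
  ring

lemma lipschitzWith_japaneseBracket_rpow {a : ℝ} (ha : a ≤ 1) :
    LipschitzWith ‖a‖₊ fun v : E => japaneseBracket v ^ a := by
  refine lipschitzWith_of_nnnorm_fderiv_le (𝕜 := ℝ)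
    ((contDiff_japaneseBracket_rpow a).differentiable one_ne_zero) fun v => ?_
  have hv := japaneseBracket_pos v
  rw [← NNReal.coe_le_coe, coe_nnnorm, coe_nnnorm,
    (hasFDerivAt_japaneseBracket_rpow a v).fderiv, norm_smul, norm_mul, innerSL_apply_norm,
    Real.norm_of_nonneg (by positivity : 0 ≤ japaneseBracket v ^ (a - 2)), mul_assoc]
  refine mul_le_of_le_one_right (norm_nonneg a) ?_
  calc japaneseBracket v ^ (a - 2) * ‖v‖
      ≤ japaneseBracket v ^ (a - 2) * japaneseBracket v := by
        gcongr; exact norm_le_japaneseBracket v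
    _ = japaneseBracket v ^ (a - 1) := by rw [← Real.rpow_add_one hv.ne']; ring_nf
    _ ≤ 1 := Real.rpow_le_one_of_one_le_of_nonpos (one_le_japaneseBracket v) (by linarith)

end JapaneseBracket

section Interpolation

lemma ennreal_add_sq_le (a b : ℝ≥0∞) : (a + b) ^ 2 ≤ 2 * (a ^ 2 + b ^ 2) := by
  have := ENNReal.rpow_add_le_mul_rpow_add_rpow a b (one_le_two (α := ℝ))
  norm_num at this
  exact this

lemma lintegral_enorm_sq_mul_rpow_mul_rpow_le {Ω F : Type*} [MeasurableSpace Ω]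
    [NormedAddCommGroup F] {μ : Measure Ω} {f : Ω → F} {h₁ h₂ : Ω → ℝ≥0∞} {q : ℝ≥0} {β γ : ℝ}
    (hf : AEStronglyMeasurable f μ) (hh₁ : AEMeasurable h₁ μ) (hh₂ : AEMeasurable h₂ μ)
    (hq : q ≠ 0) (hβ : 0 ≤ β) (hγ : 0 ≤ γ) (hsum : 2 / q + β + γ = 1) :
    ∫⁻ x, ‖f x‖ₑ ^ 2 * h₁ x ^ β * h₂ x ^ γ ∂μ ≤
      eLpNorm f q μ ^ 2 * (∫⁻ x, h₁ x ∂μ) ^ β * (∫⁻ x, h₂ x ∂μ) ^ γ := by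
  have rpow_two_div (a : ℝ≥0∞) : (a ^ (q : ℝ)) ^ (2 / q : ℝ) = a ^ 2 := by
    rw [← ENNReal.rpow_mul, mul_div_cancel₀ _ (NNReal.coe_ne_zero.2 hq), ENNReal.rpow_two]
  have holder := ENNReal.lintegral_prod_norm_pow_le (μ := μ) Finset.univ
    (f := ![fun x => ‖f x‖ₑ ^ (q : ℝ), h₁, h₂]) (p := ![2 / q, β, γ])
    (by simpa [Fin.forall_fin_succ, hh₁, hh₂] using hf.enorm.pow_const (q : ℝ))
    (by simpa [Fin.sum_univ_three] using hsum)
    (by simp [Fin.forall_fin_succ, hβ, hγ, div_nonneg])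
  simpa [Fin.prod_univ_three, rpow_two_div, ← eLpNorm_nnreal_pow_eq_lintegral hq] using holder

lemma eLpNorm_two_sq_eq_lintegral_ofReal {Ω F : Type*} [MeasurableSpace Ω]
    [NormedAddCommGroup F] (f : Ω → F) (μ : Measure Ω) :
    eLpNorm f 2 μ ^ 2 = ∫⁻ x, ENNReal.ofReal (‖f x‖ ^ 2) ∂μ := by
  have := eLpNorm_nnreal_pow_eq_lintegral (f := f) (μ := μ) (p := 2) two_ne_zero
  simpa [ENNReal.ofReal_pow, ofReal_norm] using this

lemma measurable_of_measurable_rpow {Ω : Type*} [MeasurableSpace Ω] {f : Ω → ℝ} {s : ℝ}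
    (hf : ∀ x, 0 ≤ f x) (hs : s ≠ 0) (hfs : Measurable fun x => f x ^ s) : Measurable f := by
  simpa only [Real.rpow_rpow_inv (hf _) hs] using hfs.pow_const s⁻¹

lemma rpow_eq_sq_mul_rpow_mul_rpow {x y p k α β γ : ℝ} (hx : 0 < x) (hy : 0 ≤ y) (hp : 0 < p)
    (hβ : 0 ≤ β) (hγ : 0 < γ) (hα : α * γ = k) :
    y ^ (p + p * β + γ) =
      ‖x ^ (-k / 2) * y ^ (p / 2)‖ ^ 2 * (y ^ p) ^ β * (x ^ α * y) ^ γ := by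
  rcases hy.eq_or_lt' with rfl | hy
  · rw [mul_zero, Real.zero_rpow hγ.ne', mul_zero, Real.zero_rpow (by positivity)]
  have hxk : (x ^ (-k / 2)) ^ 2 * x ^ k = 1 := by
    rw [← Real.rpow_mul_natCast hx.le, ← Real.rpow_add hx]
    simp
  have hyp : (y ^ (p / 2)) ^ 2 = y ^ p := by
    rw [← Real.rpow_mul_natCast hy.le]
    simp
  calc y ^ (p + p * β + γ) = y ^ p * (y ^ p) ^ β * y ^ γ := by
        rw [Real.rpow_add hy, Real.rpow_add hy, Real.rpow_mul hy.le]
    _ = ((x ^ (-k / 2)) ^ 2 * x ^ k) * ((y ^ (p / 2)) ^ 2 * (y ^ p) ^ β * y ^ γ) := by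
        rw [hxk, hyp, one_mul]
    _ = _ := by
        rw [Real.norm_eq_abs, sq_abs, Real.mul_rpow (by positivity) hy.le, ← Real.rpow_mul hx.le,
          hα]
        ring

lemma ofReal_rpow_eq_enorm_sq_mul_rpow_mul_rpow {x y p k α β γ : ℝ} (hx : 0 < x) (hy : 0 ≤ y)
    (hp : 0 < p) (hβ : 0 ≤ β) (hγ : 0 < γ) (hα : α * γ = k) :
    ENNReal.ofReal (y ^ (p + p * β + γ)) =
      ‖x ^ (-k / 2) * y ^ (p / 2)‖ₑ ^ 2 * ENNReal.ofReal (y ^ p) ^ β *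
        ENNReal.ofReal (x ^ α * y) ^ γ := by
  rw [rpow_eq_sq_mul_rpow_mul_rpow hx hy hp hβ hγ hα, ENNReal.ofReal_mul (by positivity),
    ENNReal.ofReal_mul (by positivity), ENNReal.ofReal_pow (norm_nonneg _), ofReal_norm,
    ENNReal.ofReal_rpow_of_nonneg (by positivity) hβ,
    ENNReal.ofReal_rpow_of_nonneg (by positivity) hγ.le]

variable {E : Type*} [NormedAddCommGroup E] [InnerProductSpace ℝ E] [FiniteDimensional ℝ E]
  [MeasurableSpace E] [BorelSpace E] (μ : Measure E) [μ.IsAddHaarMeasure]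

theorem exists_eLpNorm_japaneseBracket_mul_sq_le (hE : 0 < finrank ℝ E) {q : ℝ≥0}
    (hq : (q : ℝ)⁻¹ = 2⁻¹ - (finrank ℝ E : ℝ)⁻¹) {k : ℝ} (hk : 0 ≤ k) :
    ∃ C : ℝ≥0, ∀ u : E → ℝ, ContDiff ℝ 1 u →
      eLpNorm (fun v => japaneseBracket v ^ (-k / 2) * u v) q μ ^ 2 ≤
        C * (∫⁻ v, ENNReal.ofReal (japaneseBracket v ^ (-k) * ‖fderiv ℝ u v‖ ^ 2) ∂μ +
          ∫⁻ v, ENNReal.ofReal (u v ^ 2) ∂μ) := by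
  obtain ⟨C, hC⟩ := exists_eLpNorm_smul_le (F := ℝ) μ one_le_two hE hq
    (contDiff_japaneseBracket_rpow (-k / 2))
    (fun v => norm_japaneseBracket_rpow_le_one v (by linarith))
    (lipschitzWith_japaneseBracket_rpow (by linarith))
  refine ⟨2 * C ^ 2, fun u hu => ?_⟩
  have weighted_gradient_sq :
      eLpNorm (fun v => japaneseBracket v ^ (-k / 2) • fderiv ℝ u v) 2 μ ^ 2 =
        ∫⁻ v, ENNReal.ofReal (japaneseBracket v ^ (-k) * ‖fderiv ℝ u v‖ ^ 2) ∂μ := by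
    rw [eLpNorm_two_sq_eq_lintegral_ofReal]
    refine lintegral_congr fun v => ?_
    rw [norm_smul, mul_pow, Real.norm_eq_abs, sq_abs,
      ← Real.rpow_mul_natCast (japaneseBracket_pos v).le]
    simp
  have u_sq : eLpNorm u 2 μ ^ 2 = ∫⁻ v, ENNReal.ofReal (u v ^ 2) ∂μ := by
    simp_rw [eLpNorm_two_sq_eq_lintegral_ofReal, Real.norm_eq_abs, sq_abs]
  rw [← weighted_gradient_sq, ← u_sq]
  refine (pow_le_pow_left' (hC u hu) 2).trans ?_
  rw [mul_pow]
  push_cast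
  rw [mul_comm 2, mul_assoc]
  gcongr
  exact ennreal_add_sq_le _ _

theorem exists_lintegral_rpow_le (hE : 2 < finrank ℝ E) {p k α β γ : ℝ} (hp : 0 < p)
    (hk : 0 ≤ k) (hβ : 0 ≤ β) (hγ : 0 < γ) (hβγ : β + γ = 2 / finrank ℝ E)
    (hα : α * γ = k) :
    ∃ C : ℝ≥0, ∀ g : E → ℝ, (∀ v, 0 ≤ g v) → ContDiff ℝ 1 (fun v => g v ^ (p / 2)) →
      ∫⁻ v, ENNReal.ofReal (g v ^ (p + p * β + γ)) ∂μ ≤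
        C * (∫⁻ v, ENNReal.ofReal (japaneseBracket v ^ (-k) *
              ‖fderiv ℝ (fun w => g w ^ (p / 2)) v‖ ^ 2) ∂μ +
            ∫⁻ v, ENNReal.ofReal (g v ^ p) ∂μ) *
          (∫⁻ v, ENNReal.ofReal (g v ^ p) ∂μ) ^ β *
          (∫⁻ v, ENNReal.ofReal (japaneseBracket v ^ α * g v) ∂μ) ^ γ := by
  have hE' : (2 : ℝ) < finrank ℝ E := mod_cast hE
  obtain ⟨q, hq, hq0⟩ : ∃ q : ℝ≥0, (q : ℝ)⁻¹ = 2⁻¹ - (finrank ℝ E : ℝ)⁻¹ ∧ q ≠ 0 := by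
    have : 0 < (2⁻¹ - (finrank ℝ E : ℝ)⁻¹) := sub_pos.2 (inv_strictAnti₀ two_pos hE')
    exact ⟨⟨_, (inv_pos.2 this).le⟩, inv_inv _, ne_of_gt (inv_pos.2 this)⟩
  have hsum : 2 / (q : ℝ) + β + γ = 1 := by
    rw [add_assoc, hβγ, div_eq_mul_inv, hq]
    ring
  obtain ⟨C, hC⟩ := exists_eLpNorm_japaneseBracket_mul_sq_le μ (by lia) hq hk
  refine ⟨C, fun g hg hgp => ?_⟩
  have rpow_half_sq (v : E) : (g v ^ (p / 2)) ^ 2 = g v ^ p := by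
    rw [← Real.rpow_mul_natCast (hg v)]
    simp
  have g_measurable : Measurable g := measurable_of_measurable_rpow hg
    (by positivity : p / 2 ≠ 0) hgp.continuous.measurable
  have weight_continuous (a : ℝ) : Continuous fun v : E => japaneseBracket v ^ a :=
    (contDiff_japaneseBracket_rpow a).continuous
  calc ∫⁻ v, ENNReal.ofReal (g v ^ (p + p * β + γ)) ∂μ
      = ∫⁻ v, ‖japaneseBracket v ^ (-k / 2) * g v ^ (p / 2)‖ₑ ^ 2 *
          ENNReal.ofReal (g v ^ p) ^ β * ENNReal.ofReal (japaneseBracket v ^ α * g v) ^ γ ∂μ :=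
        lintegral_congr fun v =>
          ofReal_rpow_eq_enorm_sq_mul_rpow_mul_rpow (japaneseBracket_pos v) (hg v) hp hβ hγ hα
    _ ≤ eLpNorm (fun v => japaneseBracket v ^ (-k / 2) * g v ^ (p / 2)) q μ ^ 2 *
          (∫⁻ v, ENNReal.ofReal (g v ^ p) ∂μ) ^ β *
          (∫⁻ v, ENNReal.ofReal (japaneseBracket v ^ α * g v) ∂μ) ^ γ :=
        lintegral_enorm_sq_mul_rpow_mul_rpow_le
          ((weight_continuous _).mul hgp.continuous).aestronglyMeasurable
          (g_measurable.pow_const p).ennreal_ofReal.aemeasurable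
          ((weight_continuous α).measurable.mul g_measurable).ennreal_ofReal.aemeasurable
          hq0 hβ hγ.le hsum
    _ ≤ _ := by
        gcongr
        simpa only [rpow_half_sq] using hC _ hgp

end Interpolation

section RealIntegral

lemma integrable_and_integral_le_of_lintegral_ofReal_le {Ω : Type*} [MeasurableSpace Ω]
    {μ : Measure Ω} {f : Ω → ℝ} {b : ℝ} (hf : AEStronglyMeasurable f μ) (hf0 : 0 ≤ᵐ[μ] f)
    (hb : 0 ≤ b) (h : ∫⁻ x, ENNReal.ofReal (f x) ∂μ ≤ ENNReal.ofReal b) :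
    Integrable f μ ∧ ∫ x, f x ∂μ ≤ b := by
  refine ⟨(lintegral_ofReal_ne_top_iff_integrable hf hf0).1
    (h.trans_lt ENNReal.ofReal_lt_top).ne, ?_⟩
  rw [integral_eq_lintegral_of_nonneg_ae hf0 hf]
  exact ENNReal.toReal_le_of_le_ofReal hb h

variable {E : Type*} [NormedAddCommGroup E] [InnerProductSpace ℝ E] [FiniteDimensional ℝ E]
  [MeasurableSpace E] [BorelSpace E] (μ : Measure E) [μ.IsAddHaarMeasure]

theorem weighted_sobolev_interpolation_general (hE : 2 < finrank ℝ E) {p r k α β γ : ℝ}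
    (hp : 0 < p) (hk : 0 ≤ k) (hβ : 0 ≤ β) (hγ : 0 < γ) (hβγ : β + γ = 2 / finrank ℝ E)
    (hα : α * γ = k) (hr : r = p + p * β + γ) :
    ∃ C : ℝ, 0 < C ∧ ∀ g : E → ℝ, (∀ v, 0 ≤ g v) → ContDiff ℝ 1 (fun v => g v ^ (p / 2)) →
      Integrable (fun v => japaneseBracket v ^ (-k) *
        ‖fderiv ℝ (fun w => g w ^ (p / 2)) v‖ ^ 2) μ →
      Integrable (fun v => g v ^ p) μ →
      Integrable (fun v => japaneseBracket v ^ α * g v) μ →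
      Integrable (fun v => g v ^ r) μ ∧
      ∫ v, g v ^ r ∂μ ≤
        C * (∫ v, japaneseBracket v ^ (-k) * ‖fderiv ℝ (fun w => g w ^ (p / 2)) v‖ ^ 2 ∂μ +
            ∫ v, g v ^ p ∂μ) *
          (∫ v, g v ^ p ∂μ) ^ β * (∫ v, japaneseBracket v ^ α * g v ∂μ) ^ γ := by
  obtain ⟨C, hC⟩ := exists_lintegral_rpow_le μ hE hp hk hβ hγ hβγ hα
  refine ⟨C + 1, by positivity, fun g hg hgp gradient_int power_int moment_int => ?_⟩
  have weight_nonneg (a : ℝ) (v : E) : 0 ≤ japaneseBracket v ^ a :=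
    Real.rpow_nonneg (japaneseBracket_pos v).le a
  have gradient_nonneg (v : E) :=
    mul_nonneg (weight_nonneg (-k) v) (sq_nonneg ‖fderiv ℝ (fun w => g w ^ (p / 2)) v‖)
  have power_nonneg (s : ℝ) (v : E) : 0 ≤ g v ^ s := Real.rpow_nonneg (hg v) s
  have moment_nonneg (v : E) := mul_nonneg (weight_nonneg α v) (hg v)
  have lintegral_le := hC g hg hgp
  rw [← hr, ← ofReal_integral_eq_lintegral_ofReal gradient_int (ae_of_all μ gradient_nonneg),
    ← ofReal_integral_eq_lintegral_ofReal power_int (ae_of_all μ (power_nonneg p)),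
    ← ofReal_integral_eq_lintegral_ofReal moment_int (ae_of_all μ moment_nonneg)] at lintegral_le
  set A := ∫ v, japaneseBracket v ^ (-k) * ‖fderiv ℝ (fun w => g w ^ (p / 2)) v‖ ^ 2 ∂μ
  set P := ∫ v, g v ^ p ∂μ
  set M := ∫ v, japaneseBracket v ^ α * g v ∂μ
  have hA : 0 ≤ A := integral_nonneg gradient_nonneg
  have hP : 0 ≤ P := integral_nonneg (power_nonneg p)
  have hM : 0 ≤ M := integral_nonneg moment_nonneg
  rw [← ENNReal.ofReal_coe_nnreal, ← ENNReal.ofReal_add hA hP,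
    ENNReal.ofReal_rpow_of_nonneg hP hβ, ENNReal.ofReal_rpow_of_nonneg hM hγ.le,
    ← ENNReal.ofReal_mul (by positivity), ← ENNReal.ofReal_mul (by positivity),
    ← ENNReal.ofReal_mul (by positivity)] at lintegral_le
  have power_measurable : AEStronglyMeasurable (fun v => g v ^ r) μ :=
    ((measurable_of_measurable_rpow hg (by positivity : p / 2 ≠ 0)
      hgp.continuous.measurable).pow_const r).aestronglyMeasurable
  refine integrable_and_integral_le_of_lintegral_ofReal_le power_measurable
    (ae_of_all μ (power_nonneg r)) (by positivity) (lintegral_le.trans ?_)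
  gcongr
  exact le_add_of_nonneg_right zero_le_one

end RealIntegral

section Schwartz

variable {E F : Type*} [NormedAddCommGroup E] [NormedSpace ℝ E]
  [NormedAddCommGroup F] [NormedSpace ℝ F]

lemma schwartzMap_exists_nnnorm_fderiv_le (f : SchwartzMap E F) :
    ∃ K : ℝ≥0, ∀ x, ‖fderiv ℝ f x‖₊ ≤ K := by
  obtain ⟨K, hK_pos, hK⟩ := f.decay 0 1
  lift K to ℝ≥0 using hK_pos.le
  exact ⟨K, fun x => NNReal.coe_le_coe.1 (by simpa using hK x)⟩

lemma schwartzMap_exists_lipschitzWith_fderiv (f : SchwartzMap E F) :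
    ∃ K : ℝ≥0, LipschitzWith K (fderiv ℝ f) := by
  obtain ⟨K, hK⟩ := schwartzMap_exists_nnnorm_fderiv_le (SchwartzMap.fderivCLM ℝ E F f)
  exact ⟨K, lipschitzWith_of_nnnorm_fderiv_le (𝕜 := ℝ)
    (SchwartzMap.fderivCLM ℝ E F f).differentiable hK⟩

lemma schwartzMap_contDiff_one_rpow {g : SchwartzMap E ℝ} (hg : ∀ x, 0 ≤ g x) {s : ℝ}
    (hs : 1 / 2 < s) : ContDiff ℝ 1 fun x => g x ^ s := by
  obtain ⟨K, hK⟩ := schwartzMap_exists_lipschitzWith_fderiv g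
  exact contDiff_one_rpow_of_nonneg g.differentiable hK hg hs

lemma schwartzMap_integrable_rpow [MeasurableSpace E] [BorelSpace E] {μ : Measure E}
    [μ.HasTemperateGrowth] {g : SchwartzMap E ℝ} (hg : ∀ x, 0 ≤ g x) {s : ℝ} (hs : 0 < s) :
    Integrable (fun x => g x ^ s) μ := by
  have := (g.memLp (ENNReal.ofReal s) μ).integrable_norm_rpow (by simpa using hs) (by simp)
  simpa only [Real.norm_of_nonneg (hg _), ENNReal.toReal_ofReal hs.le] using this

end Schwartz

section SchwartzJapaneseBracket

variable {E : Type*} [NormedAddCommGroup E] [InnerProductSpace ℝ E] [MeasurableSpace E]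
  [BorelSpace E] {μ : Measure E} [μ.HasTemperateGrowth]

lemma schwartzMap_integrable_japaneseBracket_rpow_mul [SecondCountableTopology E]
    (g : SchwartzMap E ℝ) (a : ℝ) :
    Integrable (fun x => japaneseBracket x ^ a * g x) μ := by
  have := (SchwartzMap.smulLeftCLM ℝ (fun x : E => japaneseBracket x ^ a) g).integrable (μ := μ)
  rwa [SchwartzMap.smulLeftCLM_apply (hasTemperateGrowth_japaneseBracket_rpow a)] at this

lemma schwartzMap_integrable_japaneseBracket_rpow_mul_norm_fderiv_rpow_sq {g : SchwartzMap E ℝ}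
    (hg : ∀ x, 0 ≤ g x) {a s : ℝ} (ha : a ≤ 0) (hs : 1 / 2 < s) :
    Integrable (fun x => japaneseBracket x ^ a * ‖fderiv ℝ (fun y => g y ^ s) x‖ ^ 2) μ := by
  obtain ⟨K, hK⟩ := schwartzMap_exists_lipschitzWith_fderiv g
  have gradient_continuous : Continuous (fderiv ℝ fun y => g y ^ s) :=
    (schwartzMap_contDiff_one_rpow hg hs).continuous_fderiv one_ne_zero
  have gradient_int : Integrable (fun x => ‖fderiv ℝ (fun y => g y ^ s) x‖ ^ 2) μ := by
    refine ((schwartzMap_integrable_rpow hg (by linarith : 0 < 2 * s - 1)).const_mul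
      (4 * K * s ^ 2)).mono' (gradient_continuous.norm.pow 2).aestronglyMeasurable
      (ae_of_all μ fun x => ?_)
    rw [Real.norm_of_nonneg (sq_nonneg _)]
    exact norm_fderiv_rpow_sq_le_of_nonneg g.differentiable hK hg hs x
  exact gradient_int.bdd_mul
    (contDiff_japaneseBracket_rpow a).continuous.aestronglyMeasurable
    (ae_of_all μ fun x => norm_japaneseBracket_rpow_le_one x ha)

end SchwartzJapaneseBracket

lemma sum_pd_sq (f : V3 → ℝ) (v : V3) : ∑ i, pd i f v ^ 2 = ‖fderiv ℝ f v‖ ^ 2 := by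
  simp [(EuclideanSpace.basisFun (Fin 3) ℝ).norm_dual, pd]

/-- weighted Sobolev interpolation estimate (eq. interpolation_estimate). -/
theorem weighted_sobolev_interpolation (p r : ℝ) (hp : 1 < p)
    (hr1 : p + 2 / 3 < r) (hr2 : r < 5 * p / 3) :
    ∃ C : ℝ, 0 < C ∧
      ∀ g : SchwartzMap V3 ℝ, (∀ v, 0 ≤ g v) →
        (∫ v : V3, g v ^ r) ≤
          C * ((∫ v : V3, jap v ^ (-3 : ℝ) *
                  (∑ i : Fin 3, (pd i (fun w => g w ^ (p / 2)) v) ^ 2)) +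
                (∫ v : V3, g v ^ p)) *
            (∫ v : V3, g v ^ p) ^ ((r - p - 2 / 3) / (p - 1)) *
            (∫ v : V3, jap v ^ (9 * (p - 1) / (5 * p - 3 * r)) * g v) ^
              ((5 * p - 3 * r) / (3 * (p - 1))) := by
  have hp' : 0 < p - 1 := by linarith
  have hpr : 0 < 5 * p - 3 * r := by linarith
  obtain ⟨C, hC, hbound⟩ := weighted_sobolev_interpolation_general (volume : Measure V3)
    (p := p) (r := r) (k := 3) (α := 9 * (p - 1) / (5 * p - 3 * r))
    (β := (r - p - 2 / 3) / (p - 1)) (γ := (5 * p - 3 * r) / (3 * (p - 1)))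
    (by simp) (by positivity) (by positivity)
    (div_nonneg (by linarith) hp'.le) (by positivity)
    (by rw [finrank_euclideanSpace_fin]; field_simp; ring)
    (by rw [div_mul_div_comm, div_eq_iff (by positivity)]; ring) (by field_simp; ring)
  refine ⟨C, hC, fun g hg => ?_⟩
  simp_rw [sum_pd_sq]
  exact (hbound g hg (schwartzMap_contDiff_one_rpow hg (by linarith))
    (schwartzMap_integrable_japaneseBracket_rpow_mul_norm_fderiv_rpow_sq hg (by norm_num)
      (by linarith))
    (schwartzMap_integrable_rpow hg (by positivity))
    (schwartzMap_integrable_japaneseBracket_rpow_mul g _)).2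

end
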